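/- For a nonempty Pareto frontier V in [0,1]^K, the following are equivalent: (1) up(V) is closed and convex (i.e., V ∈ 𝓕); (2) V is p-convex and up(V) is closed. -/

import Mathlib

/-- The upset of `A` within `[0,1]^K`: points of `[0,1]^K` dominating some point of `A`. -/
def upset (K : ℕ) (A : Set (Fin K → ℝ)) : Set (Fin K → ℝ) :=
  {x | x ∈ Set.Icc (0 : Fin K → ℝ) 1 ∧ ∃ y ∈ A, y ≤ x}

/-- Membership in the space `𝓕`: a nonempty Pareto frontier in `[0,1]^K`
(no element dominates a different element) whose upset is closed and convex. -/
def memF (K : ℕ) (V : Set (Fin K → ℝ)) : Prop :=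
  V.Nonempty ∧ V ⊆ Set.Icc (0 : Fin K → ℝ) 1 ∧
    (∀ u ∈ V, ∀ v ∈ V, u ≤ v → u = v) ∧
    IsClosed (upset K V) ∧ Convex ℝ (upset K V)

/-- The metric `d` on `𝓕`: Hausdorff distance (for the ℓ∞ norm) between upsets. -/
noncomputable def dF (K : ℕ) (U V : Set (Fin K → ℝ)) : ℝ :=
  Metric.hausdorffDist (upset K U) (upset K V)

section OrderedModule

open Set

variable (𝕜 : Type*) {E : Type*}

/-- The p-convexity of a Pareto frontier, for an arbitrary set `A`: every point of a segment with
endpoints in `A` dominates a point of `A`. The form with an explicit parameter in `[0, 1]` is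
`pConvex_iff_forall_mem_Icc`. -/
def PConvex [Semiring 𝕜] [PartialOrder 𝕜] [AddCommMonoid E] [Preorder E] [SMul 𝕜 E]
    (A : Set E) : Prop :=
  ∀ u ∈ A, ∀ v ∈ A, segment 𝕜 u v ⊆ upperClosure A

variable {𝕜}

theorem pConvex_iff_forall_mem_Icc [Ring 𝕜] [PartialOrder 𝕜] [AddRightMono 𝕜]
    [AddCommGroup E] [Preorder E] [Module 𝕜 E] {A : Set E} :
    PConvex 𝕜 A ↔
      ∀ u ∈ A, ∀ v ∈ A, ∀ l ∈ Icc (0 : 𝕜) 1, ∃ r ∈ A, r ≤ l • u + (1 - l) • v := by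
  refine forall₄_congr fun u _ v _ => ?_
  rw [segment_symm, segment_eq_image, image_subset_iff]
  simp only [add_comm, subset_def, mem_preimage, SetLike.mem_coe, mem_upperClosure]

section

variable [Semiring 𝕜] [PartialOrder 𝕜] [AddCommMonoid E] [Preorder E]
  {s A : Set E}

theorem PConvex.convex_upperClosure [AddLeftMono E] [SMul 𝕜 E] [PosSMulMono 𝕜 E]
    (hA : PConvex 𝕜 A) :
    Convex 𝕜 (upperClosure A : Set E) := by
  rintro x ⟨u, hu, hux⟩ y ⟨v, hv, hvy⟩ a b ha hb hab
  have hcombo : a • u + b • v ≤ a • x + b • y := by gcongr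
  exact (upperClosure A).upper hcombo (hA u hu v hv ⟨a, b, ha, hb, hab, rfl⟩)

theorem PConvex.of_convex_inter_upperClosure [SMul 𝕜 E] (hAs : A ⊆ s)
    (h : Convex 𝕜 (s ∩ upperClosure A)) : PConvex 𝕜 A := fun _ hu _ hv =>
  have hA : A ⊆ s ∩ upperClosure A := subset_inter hAs subset_upperClosure
  (h.segment_subset (hA hu) (hA hv)).trans inter_subset_right

theorem memF_iff_pConvex_general [AddLeftMono E] [SMul 𝕜 E] [PosSMulMono 𝕜 E]
    (hs : Convex 𝕜 s) (hAs : A ⊆ s) :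
    Convex 𝕜 (s ∩ upperClosure A) ↔ PConvex 𝕜 A :=
  ⟨PConvex.of_convex_inter_upperClosure hAs, fun hA => hs.inter hA.convex_upperClosure⟩

end

end OrderedModule

theorem upset_eq_Icc_inter_upperClosure (K : ℕ) (A : Set (Fin K → ℝ)) :
    upset K A = Set.Icc 0 1 ∩ upperClosure A :=
  rfl

/-- for a nonempty Pareto frontier `V` in `[0,1]^K`, the upset of `V`
is closed and convex (i.e. `V ∈ 𝓕`) iff `V` is p-convex and its upset is closed. -/
theorem memF_iff_pConvex {K : ℕ} (V : Set (Fin K → ℝ)) (hne : V.Nonempty)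
    (hsub : V ⊆ Set.Icc (0 : Fin K → ℝ) 1)
    (hanti : ∀ u ∈ V, ∀ v ∈ V, u ≤ v → u = v) :
    (IsClosed (upset K V) ∧ Convex ℝ (upset K V)) ↔
      ((∀ u ∈ V, ∀ v ∈ V, ∀ l : ℝ, l ∈ Set.Icc (0:ℝ) 1 →
          ∃ r ∈ V, r ≤ l • u + (1 - l) • v) ∧
        IsClosed (upset K V)) := by
  rw [and_comm, ← pConvex_iff_forall_mem_Icc, upset_eq_Icc_inter_upperClosure,
    memF_iff_pConvex_general (convex_Icc 0 1) hsub]
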